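/- Let f : ℝⁿ → ℝ be continuously differentiable, let x, d ∈ ℝⁿ with d ≠ 0 and ∇f(x)ᵀd < 0, let B be a symmetric real n×n matrix with dᵀB d ≤ 0, and let σ ∈ (0,1). Then there exists λ̄ > 0 such that f(x + λ d) − f(x) ≤ σ λ ∇f(x)ᵀd + (σ/2) λ² dᵀ B d for all λ ∈ [0, λ̄]. -/

import Mathlib

open Matrix

/-- Let `f : ℝⁿ → ℝ` be continuously differentiable, `d ≠ 0` a descent
direction (`∇f(x)ᵀd < 0`), `B` symmetric with `dᵀBd ≤ 0`, and `σ ∈ (0,1)`. Then there is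
`λ̄ > 0` such that the modified Armijo condition
`f(x + λd) − f(x) ≤ σλ ∇f(x)ᵀd + (σ/2) λ² dᵀBd` holds for all `λ ∈ [0, λ̄]`.
(Here `∇f(x)ᵀd` is the directional derivative `fderiv ℝ f x d`.) -/
theorem modified_armijo_exists {n : ℕ} (f : (Fin n → ℝ) → ℝ) (hf : ContDiff ℝ 1 f)
    (x d : Fin n → ℝ) (hd : d ≠ 0)
    (B : Matrix (Fin n) (Fin n) ℝ) (hB : B.IsSymm)
    (hgd : fderiv ℝ f x d < 0) (hBd : d ⬝ᵥ B.mulVec d ≤ 0)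
    (σ : ℝ) (hσ : σ ∈ Set.Ioo (0 : ℝ) 1) :
    ∃ lam : ℝ, 0 < lam ∧ ∀ μ ∈ Set.Icc (0 : ℝ) lam,
      f (x + μ • d) - f x ≤ σ * μ * fderiv ℝ f x d + σ / 2 * μ ^ 2 * (d ⬝ᵥ B.mulVec d) := by
  obtain ⟨h0, h1⟩ := hσ
  generalize d ⬝ᵥ B.mulVec d = q at *
  have hF : HasFDerivAt f (fderiv ℝ f x) (x + (0 : ℝ) • d) := by
    simpa using (hf.differentiable (by norm_num) x).hasFDerivAt
  have hline : HasDerivAt (fun μ : ℝ => x + μ • d) d 0 := by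
    simpa using ((hasDerivAt_id (0 : ℝ)).smul_const d).const_add x
  have hcomp : HasDerivAt (fun μ : ℝ => f (x + μ • d)) (fderiv ℝ f x d) 0 :=
    hF.comp_hasDerivAt (0 : ℝ) hline
  generalize fderiv ℝ f x d = g at *
  have hc : 0 < -((1 - σ) * g) / 2 := by nlinarith
  have hlo := (hasDerivAt_iff_isLittleO.1 hcomp).def hc
  have hq : ∀ᶠ μ : ℝ in nhds 0, -(σ / 2 * μ * q) < -((1 - σ) * g) / 2 := by
    have hcont : Continuous (fun μ : ℝ => -(σ / 2 * μ * q)) := by fun_prop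
    exact hcont.continuousAt.eventually_lt continuousAt_const (by simpa using hc)
  obtain ⟨ε, hε, hball⟩ := Metric.eventually_nhds_iff.1 (hlo.and hq)
  refine ⟨ε / 2, by linarith, fun μ hμ => ?_⟩
  obtain ⟨hμ0, hμ1⟩ := hμ
  have hdist : dist μ 0 < ε := by
    rw [Real.dist_eq, sub_zero, abs_of_nonneg hμ0]; linarith
  obtain ⟨ha, hb⟩ := hball hdist
  simp only [zero_smul, add_zero, sub_zero, Real.norm_eq_abs, smul_eq_mul,
    abs_of_nonneg hμ0] at ha
  have ha' := (abs_le.1 ha).2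
  have hb' := mul_le_mul_of_nonneg_left hb.le hμ0
  nlinarith
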